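/- The volume (6-dimensional Lebesgue measure) of the polytope E_{123} ⊂ ℝ⁶ defined by the Q-inequalities for each of A, B, C together with A ≻_1 B, B ≻_2 C, C ≻_3 A equals 23/(1800·512) = 23/921600. -/

import Mathlib

open MeasureTheory

/-- The polytope `E₁₂₃ ⊂ ℝ⁶` with coordinates `(a1,a2,b1,b2,c1,c2)`:
the `Q`-inequalities for each of `A`, `B`, `C` together with
`A ≻₁ B`, `B ≻₂ C`, `C ≻₃ A`. -/
def E123 : Set (Fin 6 → ℝ) :=
  {x |
    -- Q-inequalities for A = (x 0, x 1)
    (0 ≤ x 0 ∧ x 0 ≤ x 1 ∧ 1 ≤ 2 * x 0 + 2 * x 1 ∧ 2 * x 0 + 4 * x 1 ≤ 3) ∧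
    -- Q-inequalities for B = (x 2, x 3)
    (0 ≤ x 2 ∧ x 2 ≤ x 3 ∧ 1 ≤ 2 * x 2 + 2 * x 3 ∧ 2 * x 2 + 4 * x 3 ≤ 3) ∧
    -- Q-inequalities for C = (x 4, x 5)
    (0 ≤ x 4 ∧ x 4 ≤ x 5 ∧ 1 ≤ 2 * x 4 + 2 * x 5 ∧ 2 * x 4 + 4 * x 5 ≤ 3) ∧
    -- A ≻₁ B
    (x 0 ≤ x 2 ∧ x 3 ≤ x 1 ∧ x 0 + x 1 ≤ x 2 + x 3) ∧
    -- B ≻₂ C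
    (x 4 ≤ x 2 ∧ x 3 ≤ x 5 ∧ x 2 + x 3 ≤ x 4 + x 5) ∧
    -- C ≻₃ A
    (x 0 ≤ x 4 ∧ x 1 ≤ x 5 ∧ x 0 + x 1 ≤ x 4 + x 5)}


/-- Standard corner simplex cut by a homogeneous half-space. -/
def cutS {n : ℕ} (m : Fin n → ℝ) : Set (Fin n → ℝ) :=
  {y | (∀ i, 0 ≤ y i) ∧ ∑ i, y i ≤ 1 ∧ 0 ≤ ∑ i, m i * y i}

lemma hyper_null {n : ℕ} (f : (Fin n → ℝ) →ₗ[ℝ] ℝ) (hf : f ≠ 0) :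
    volume {y | f y = 0} = 0 := by
  have := Measure.addHaar_submodule (volume : Measure (Fin n → ℝ)) (LinearMap.ker f)
    (by rwa [Ne, LinearMap.ker_eq_top])
  exact this

/-- Split a set by a linear functional. -/
lemma vol_split {n : ℕ} (f : (Fin n → ℝ) →ₗ[ℝ] ℝ) (hf : f ≠ 0) (S : Set (Fin n → ℝ)) :
    volume S = volume (S ∩ {y | 0 ≤ f y}) + volume (S ∩ {y | f y ≤ 0}) := by
  have hm : MeasurableSet {y | 0 ≤ f y} :=
    measurableSet_le measurable_const (LinearMap.continuous_of_finiteDimensional f).measurable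
  rw [← measure_inter_add_sdiff S hm]
  congr 1
  apply le_antisymm
  · apply measure_mono
    rintro y ⟨h1, h2⟩
    simp only [Set.mem_ofPred_eq, not_le] at h2
    exact ⟨h1, h2.le⟩
  · calc volume (S ∩ {y | f y ≤ 0})
        ≤ volume ((S \ {y | 0 ≤ f y}) ∪ {y | f y = 0}) := by
          apply measure_mono
          rintro y ⟨h1, h2⟩
          simp only [Set.mem_ofPred_eq] at h2
          rcases h2.lt_or_eq with h | h
          · left; exact ⟨h1, by simpa using h⟩
          · right; exact h
      _ ≤ _ := (measure_union_le _ _).trans (by rw [hyper_null f hf, add_zero])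

lemma vol_half {n : ℕ} (m : Fin n → ℝ) (i j : Fin n) (hij : i ≠ j) (h : m i * m j < 0) :
    volume (cutS m ∩ {y | 0 ≤ y i + (m j / m i) * y j})
      = ENNReal.ofReal (m i / (m i - m j)) * volume (cutS (Function.update m j 0)) := by
  have hi : m i ≠ 0 := by rintro h0; simp [h0] at h
  have hs : 0 < (m i - m j) / m i := by
    have : (m i - m j) / m i = (m i ^ 2 - m i * m j) / (m i ^ 2) := by field_simp
    rw [this]
    have h1 : 0 < m i ^ 2 := by positivity
    exact div_pos (by linarith) h1
  have hd : m i - m j ≠ 0 := by rintro h0; simp [h0] at hs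
  have hr : m j / m i < 0 := by
    have : m j / m i = 1 - (m i - m j) / m i := by field_simp; ring
    have h2 : m j / m i = (m i * m j) / (m i ^ 2) := by field_simp
    rw [h2]
    exact div_neg_of_neg_of_pos h (by positivity)
  set M : Matrix (Fin n) (Fin n) ℝ := Matrix.transvection i j (m j / (m i - m j)) *
    Matrix.diagonal (Function.update (fun _ => 1) j ((m i - m j) / m i)) with hM
  have hdet : M.det = (m i - m j) / m i := by
    rw [hM, Matrix.det_mul, Matrix.det_transvection_of_ne _ _ hij, Matrix.det_diagonal,
      Finset.prod_update_of_mem (Finset.mem_univ _)]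
    simp
  have hz : ∀ y k, (Matrix.toLin' M y) k = y k + m j / m i * y j *
      ((if k = i then 1 else 0) - (if k = j then 1 else 0)) := by
    intro y k
    rw [Matrix.toLin'_apply, hM, ← Matrix.mulVec_mulVec, Matrix.transvection, Matrix.add_mulVec,
      Matrix.one_mulVec, Pi.add_apply, Matrix.mulVec_diagonal, Matrix.single_mulVec]
    by_cases hk : k = i
    · subst hk
      simp [Function.update_of_ne hij, hij, Matrix.mulVec_diagonal]
      field_simp
    · by_cases hk' : k = j
      · subst hk'
        simp [hk]
        field_simp
        ring
      · simp [hk, hk', Function.update_of_ne hk']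
  have hpre : cutS m ∩ {y | 0 ≤ y i + (m j / m i) * y j}
      = (Matrix.toLin' M) ⁻¹' (cutS (Function.update m j 0)) := by
    ext y
    have hzi := hz y i
    have hzj := hz y j
    simp only [hij, hij.symm, if_true, if_false] at hzi hzj
    have hzj' : (Matrix.toLin' M y) j = (m i - m j) / m i * y j := by
      rw [hzj]; field_simp; ring
    have s1 : ∑ k, (Matrix.toLin' M y) k = ∑ k, y k := by
      simp_rw [hz, mul_sub, Finset.sum_add_distrib, Finset.sum_sub_distrib]
      simp
    have s2 : ∑ k, (Function.update m j 0) k * (Matrix.toLin' M y) k = ∑ k, m k * y k := by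
      have : ∀ k, (Function.update m j 0) k * (Matrix.toLin' M y) k
          = m k * y k + (if k = i then m j * y j else 0) - (if k = j then m j * y j else 0) := by
        intro k
        rw [hz]
        by_cases hk : k = i
        · subst hk
          simp [Function.update_of_ne hij, hij]
          field_simp
        · by_cases hk' : k = j
          · subst hk'
            simp [hk]
          · simp [hk, hk', Function.update_of_ne hk']
      simp_rw [this, Finset.sum_sub_distrib, Finset.sum_add_distrib]
      simp
    change ((∀ k, 0 ≤ y k) ∧ ∑ k, y k ≤ 1 ∧ 0 ≤ ∑ k, m k * y k) ∧ 0 ≤ y i + (m j / m i) * y j ↔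
      ((∀ k, 0 ≤ (Matrix.toLin' M y) k) ∧ ∑ k, (Matrix.toLin' M y) k ≤ 1 ∧
        0 ≤ ∑ k, (Function.update m j 0) k * (Matrix.toLin' M y) k)
    rw [s1, s2]
    constructor
    · rintro ⟨⟨h1, h2, h3⟩, h4⟩
      refine ⟨fun k => ?_, h2, h3⟩
      by_cases hk : k = i
      · subst hk; rw [hzi]; linarith
      · by_cases hk' : k = j
        · subst hk'; rw [hzj']; exact mul_nonneg hs.le (h1 _)
        · rw [hz]; simpa [hk, hk'] using h1 k
    · rintro ⟨h1, h2, h3⟩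
      have hj0 : 0 ≤ y j := by
        have := h1 j
        rw [hzj'] at this
        exact nonneg_of_mul_nonneg_right this hs
      have hi0 := h1 i
      rw [hzi] at hi0
      refine ⟨⟨fun k => ?_, h2, h3⟩, by linarith⟩
      by_cases hk : k = i
      · subst hk; nlinarith
      · by_cases hk' : k = j
        · subst hk'; exact hj0
        · have := h1 k
          rw [hz] at this
          simpa [hk, hk'] using this
  rw [hpre, Measure.addHaar_preimage_linearMap _ (by rw [LinearMap.det_toLin', hdet]; exact hs.ne'),
    LinearMap.det_toLin', hdet, inv_div, abs_of_pos (by rw [← inv_div]; exact inv_pos.mpr hs)]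

lemma simplex_vol (n : ℕ) : ∀ t : ℝ, 0 ≤ t →
    volume {y : Fin n → ℝ | (∀ i, 0 ≤ y i) ∧ ∑ i, y i ≤ t} = ENNReal.ofReal (t ^ n / n.factorial) := by
  induction n with
  | zero =>
    intro t ht
    simp [ht, volume_pi]
  | succ n ih =>
    intro t ht
    have hms : MeasurableSet {y : Fin (n+1) → ℝ | (∀ i, 0 ≤ y i) ∧ ∑ i, y i ≤ t} := by
      measurability
    have e := (volume_preserving_piFinSuccAbove (fun _ : Fin (n + 1) => ℝ) 0).symm
    rw [← e.measure_preimage hms.nullMeasurableSet, Measure.volume_eq_prod,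
      Measure.prod_apply (e.measurable hms)]
    have key : ∀ x : ℝ, volume (Prod.mk x ⁻¹' ((MeasurableEquiv.piFinSuccAbove (fun _ : Fin (n + 1) => ℝ) 0).symm ⁻¹'
        {y : Fin (n+1) → ℝ | (∀ i, 0 ≤ y i) ∧ ∑ i, y i ≤ t}))
        = (Set.Icc 0 t).indicator (fun x => ENNReal.ofReal ((t - x) ^ n / n.factorial)) x := by
      intro x
      by_cases hx : x ∈ Set.Icc 0 t
      · rw [Set.indicator_of_mem hx, ← ih (t - x) (by linarith [hx.2])]
        congr 1
        ext y
        simp [MeasurableEquiv.piFinSuccAbove, Fin.forall_fin_succ, Fin.sum_univ_succ, hx.1, le_sub_iff_add_le']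
      · rw [Set.indicator_of_notMem hx]
        convert measure_empty (μ := volume)
        ext y
        simp [MeasurableEquiv.piFinSuccAbove, Fin.forall_fin_succ, Fin.sum_univ_succ]
        intro h0 h1
        have : t < x := by
          by_contra hh
          exact hx ⟨h0, not_lt.mp hh⟩
        have := Finset.sum_nonneg (fun i (_ : i ∈ Finset.univ) => h1 i)
        linarith
    simp_rw [key]
    rw [lintegral_indicator measurableSet_Icc, ← ofReal_integral_eq_lintegral_ofReal]
    · congr 1
      rw [integral_Icc_eq_integral_Ioc, ← intervalIntegral.integral_of_le ht]
      rw [intervalIntegral.integral_comp_sub_left (fun x => x ^ n / (n.factorial : ℝ)) t]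
      rw [intervalIntegral.integral_div, integral_pow, Nat.factorial_succ]
      push_cast
      field_simp
      simp
    · apply Continuous.integrableOn_Icc
      fun_prop
    · filter_upwards [ae_restrict_mem measurableSet_Icc] with x hx
      have : 0 ≤ t - x := by linarith [hx.2]
      positivity

lemma base_pos {n : ℕ} (m : Fin n → ℝ) (h : ∀ i, 0 ≤ m i) :
    volume (cutS m) = ENNReal.ofReal (1 / n.factorial) := by
  have := simplex_vol n 1 zero_le_one
  rw [one_pow] at this
  rw [← this]
  congr 1
  ext y
  constructor
  · rintro ⟨h1, h2, -⟩; exact ⟨h1, h2⟩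
  · rintro ⟨h1, h2⟩; exact ⟨h1, h2, Finset.sum_nonneg fun i _ => mul_nonneg (h i) (h1 i)⟩

lemma base_neg {n : ℕ} (m : Fin n → ℝ) (h : ∀ i, m i ≤ 0) (k : Fin n) (hk : m k ≠ 0) :
    volume (cutS m) = ENNReal.ofReal 0 := by
  rw [ENNReal.ofReal_zero]
  refine measure_mono_null ?_ (hyper_null (LinearMap.proj k) ?_)
  · rintro y ⟨h1, -, h3⟩
    have h4 : ∀ i ∈ Finset.univ, m i * y i ≤ 0 :=
      fun i _ => mul_nonpos_of_nonpos_of_nonneg (h i) (h1 i)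
    have h5 : ∑ i, m i * y i = 0 := le_antisymm (Finset.sum_nonpos h4) h3
    have h6 := (Finset.sum_eq_zero_iff_of_nonpos h4).mp h5 k (Finset.mem_univ _)
    exact (mul_eq_zero.mp h6).resolve_left hk
  · intro h0
    have := congrArg (fun f => f (Pi.single k 1)) h0
    simp at this

lemma vol_rec {n : ℕ} (m : Fin n → ℝ) (i j : Fin n) (hi : 0 < m i) (hj : m j < 0) (u v w : ℝ)
    (hu0 : 0 ≤ u) (hv0 : 0 ≤ v)
    (hu : volume (cutS (Function.update m j 0)) = ENNReal.ofReal u)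
    (hv : volume (cutS (Function.update m i 0)) = ENNReal.ofReal v)
    (hw : w = (m i * u - m j * v) / (m i - m j)) :
    volume (cutS m) = ENNReal.ofReal w := by
  have hij : i ≠ j := by rintro rfl; linarith
  have hd : 0 < m i - m j := by linarith
  have h1 := vol_half m i j hij (mul_neg_of_pos_of_neg hi hj)
  have h2 := vol_half m j i hij.symm (mul_neg_of_neg_of_pos hj hi)
  let f : (Fin n → ℝ) →ₗ[ℝ] ℝ := LinearMap.proj i + (m j / m i) • LinearMap.proj j
  have hf : f ≠ 0 := by
    intro h0
    have := congrArg (fun f => f (Pi.single i 1)) h0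
    simp [f, hij, hij.symm] at this
  rw [vol_split f hf]
  have e1 : {y | 0 ≤ f y} = {y | 0 ≤ y i + (m j / m i) * y j} := rfl
  have e2 : {y | f y ≤ 0} = {y | 0 ≤ y j + (m i / m j) * y i} := by
    ext y
    change y i + (m j / m i) * y j ≤ 0 ↔ 0 ≤ y j + (m i / m j) * y i
    have : y i + (m j / m i) * y j = (m j / m i) * (y j + (m i / m j) * y i) := by
      field_simp [hj.ne]
      ring
    rw [this]
    have hneg : m j / m i < 0 := div_neg_of_neg_of_pos hj hi
    constructor
    · intro h; by_contra hh; push Not at hh; nlinarith [mul_pos_of_neg_of_neg hneg hh]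
    · intro h; exact mul_nonpos_of_nonpos_of_nonneg hneg.le h
  have h3 : m j / (m j - m i) = - m j / (m i - m j) := by
    rw [← neg_sub (m i) (m j), div_neg, neg_div]
  rw [e1, e2, h1, h2, hu, hv, h3, ← ENNReal.ofReal_mul (by positivity),
    ← ENNReal.ofReal_mul (div_nonneg (by linarith) hd.le),
    ← ENNReal.ofReal_add (by positivity) (mul_nonneg (div_nonneg (by linarith) hd.le) hv0), hw]
  congr 1
  field_simp
  ring

lemma vol_rec' {n : ℕ} (m p q : Fin n → ℝ) (i j : Fin n) (u v w : ℝ)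
    (hu : volume (cutS p) = ENNReal.ofReal u)
    (hv : volume (cutS q) = ENNReal.ofReal v)
    (hp : Function.update m j 0 = p) (hq : Function.update m i 0 = q)
    (s t : ℝ) (hmi : m i = s) (hmj : m j = t)
    (hs : 0 < s ∧ t < 0 ∧ 0 ≤ u ∧ 0 ≤ v)
    (hw : w = (s * u - t * v) / (s - t)) :
    volume (cutS m) = ENNReal.ofReal w := by
  subst hmi hmj
  subst hp hq
  exact vol_rec m i j hs.1 hs.2.1 u v w hs.2.2.1 hs.2.2.2 hu hv hw

lemma case_one : volume (cutS (![1, (1/2), (1/2), (-1/4), (-1), (-1)] : Fin 6 → ℝ)) = ENNReal.ofReal (23/36450) := by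
  have h0 : volume (cutS (![1, (1/2), (1/2), 0, 0, 0] : Fin 6 → ℝ)) = ENNReal.ofReal (1/720) := by
    rw [base_pos _ (by norm_num [Fin.forall_fin_succ])]; norm_num [Nat.factorial]
  have h1 : volume (cutS (![0, (1/2), (1/2), 0, 0, 0] : Fin 6 → ℝ)) = ENNReal.ofReal (1/720) := by
    rw [base_pos _ (by norm_num [Fin.forall_fin_succ])]; norm_num [Nat.factorial]
  have h2 : volume (cutS (![0, 0, (1/2), 0, 0, 0] : Fin 6 → ℝ)) = ENNReal.ofReal (1/720) := by
    rw [base_pos _ (by norm_num [Fin.forall_fin_succ])]; norm_num [Nat.factorial]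
  have h3 : volume (cutS (![0, 0, 0, 0, 0, (-1)] : Fin 6 → ℝ)) = ENNReal.ofReal 0 := by
    exact base_neg _ (by norm_num [Fin.forall_fin_succ]) 5 (by simp)
  have h4 : volume (cutS (![0, 0, (1/2), 0, 0, (-1)] : Fin 6 → ℝ)) = ENNReal.ofReal (1/2160) := by
    exact vol_rec' _ _ _ 2 5 _ _ _ h2 h3 (by funext k; fin_cases k <;> rfl)
      (by funext k; fin_cases k <;> rfl) (1/2) (-1) rfl rfl (by norm_num) (by norm_num)
  have h5 : volume (cutS (![0, (1/2), (1/2), 0, 0, (-1)] : Fin 6 → ℝ)) = ENNReal.ofReal (1/1296) := by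
    exact vol_rec' _ _ _ 1 5 _ _ _ h1 h4 (by funext k; fin_cases k <;> rfl)
      (by funext k; fin_cases k <;> rfl) (1/2) (-1) rfl rfl (by norm_num) (by norm_num)
  have h6 : volume (cutS (![1, (1/2), (1/2), 0, 0, (-1)] : Fin 6 → ℝ)) = ENNReal.ofReal (7/6480) := by
    exact vol_rec' _ _ _ 0 5 _ _ _ h0 h5 (by funext k; fin_cases k <;> rfl)
      (by funext k; fin_cases k <;> rfl) 1 (-1) rfl rfl (by norm_num) (by norm_num)
  have h7 : volume (cutS (![0, 0, 0, 0, (-1), (-1)] : Fin 6 → ℝ)) = ENNReal.ofReal 0 := by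
    exact base_neg _ (by norm_num [Fin.forall_fin_succ]) 4 (by simp)
  have h8 : volume (cutS (![0, 0, (1/2), 0, (-1), (-1)] : Fin 6 → ℝ)) = ENNReal.ofReal (1/6480) := by
    exact vol_rec' _ _ _ 2 4 _ _ _ h4 h7 (by funext k; fin_cases k <;> rfl)
      (by funext k; fin_cases k <;> rfl) (1/2) (-1) rfl rfl (by norm_num) (by norm_num)
  have h9 : volume (cutS (![0, (1/2), (1/2), 0, (-1), (-1)] : Fin 6 → ℝ)) = ENNReal.ofReal (7/19440) := by
    exact vol_rec' _ _ _ 1 4 _ _ _ h5 h8 (by funext k; fin_cases k <;> rfl)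
      (by funext k; fin_cases k <;> rfl) (1/2) (-1) rfl rfl (by norm_num) (by norm_num)
  have h10 : volume (cutS (![1, (1/2), (1/2), 0, (-1), (-1)] : Fin 6 → ℝ)) = ENNReal.ofReal (7/9720) := by
    exact vol_rec' _ _ _ 0 4 _ _ _ h6 h9 (by funext k; fin_cases k <;> rfl)
      (by funext k; fin_cases k <;> rfl) 1 (-1) rfl rfl (by norm_num) (by norm_num)
  have h11 : volume (cutS (![0, 0, 0, (-1/4), (-1), (-1)] : Fin 6 → ℝ)) = ENNReal.ofReal 0 := by
    exact base_neg _ (by norm_num [Fin.forall_fin_succ]) 3 (by simp)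
  have h12 : volume (cutS (![0, 0, (1/2), (-1/4), (-1), (-1)] : Fin 6 → ℝ)) = ENNReal.ofReal (1/9720) := by
    exact vol_rec' _ _ _ 2 3 _ _ _ h8 h11 (by funext k; fin_cases k <;> rfl)
      (by funext k; fin_cases k <;> rfl) (1/2) (-1/4) rfl rfl (by norm_num) (by norm_num)
  have h13 : volume (cutS (![0, (1/2), (1/2), (-1/4), (-1), (-1)] : Fin 6 → ℝ)) = ENNReal.ofReal (1/3645) := by
    exact vol_rec' _ _ _ 1 3 _ _ _ h9 h12 (by funext k; fin_cases k <;> rfl)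
      (by funext k; fin_cases k <;> rfl) (1/2) (-1/4) rfl rfl (by norm_num) (by norm_num)
  have h14 : volume (cutS (![1, (1/2), (1/2), (-1/4), (-1), (-1)] : Fin 6 → ℝ)) = ENNReal.ofReal (23/36450) := by
    exact vol_rec' _ _ _ 0 3 _ _ _ h10 h13 (by funext k; fin_cases k <;> rfl)
      (by funext k; fin_cases k <;> rfl) 1 (-1/4) rfl rfl (by norm_num) (by norm_num)
  exact h14

lemma case_two : volume (cutS (![1, (1/2), (1/2), (1/5), (-1), (-1)] : Fin 6 → ℝ)) = ENNReal.ofReal (23/29160) := by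
  have h0 : volume (cutS (![1, (1/2), (1/2), (1/5), 0, 0] : Fin 6 → ℝ)) = ENNReal.ofReal (1/720) := by
    rw [base_pos _ (by norm_num [Fin.forall_fin_succ])]; norm_num [Nat.factorial]
  have h1 : volume (cutS (![0, (1/2), (1/2), (1/5), 0, 0] : Fin 6 → ℝ)) = ENNReal.ofReal (1/720) := by
    rw [base_pos _ (by norm_num [Fin.forall_fin_succ])]; norm_num [Nat.factorial]
  have h2 : volume (cutS (![0, 0, (1/2), (1/5), 0, 0] : Fin 6 → ℝ)) = ENNReal.ofReal (1/720) := by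
    rw [base_pos _ (by norm_num [Fin.forall_fin_succ])]; norm_num [Nat.factorial]
  have h3 : volume (cutS (![0, 0, 0, (1/5), 0, 0] : Fin 6 → ℝ)) = ENNReal.ofReal (1/720) := by
    rw [base_pos _ (by norm_num [Fin.forall_fin_succ])]; norm_num [Nat.factorial]
  have h4 : volume (cutS (![0, 0, 0, 0, 0, (-1)] : Fin 6 → ℝ)) = ENNReal.ofReal 0 := by
    exact base_neg _ (by norm_num [Fin.forall_fin_succ]) 5 (by simp)
  have h5 : volume (cutS (![0, 0, 0, (1/5), 0, (-1)] : Fin 6 → ℝ)) = ENNReal.ofReal (1/4320) := by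
    exact vol_rec' _ _ _ 3 5 _ _ _ h3 h4 (by funext k; fin_cases k <;> rfl)
      (by funext k; fin_cases k <;> rfl) (1/5) (-1) rfl rfl (by norm_num) (by norm_num)
  have h6 : volume (cutS (![0, 0, (1/2), (1/5), 0, (-1)] : Fin 6 → ℝ)) = ENNReal.ofReal (1/1620) := by
    exact vol_rec' _ _ _ 2 5 _ _ _ h2 h5 (by funext k; fin_cases k <;> rfl)
      (by funext k; fin_cases k <;> rfl) (1/2) (-1) rfl rfl (by norm_num) (by norm_num)
  have h7 : volume (cutS (![0, (1/2), (1/2), (1/5), 0, (-1)] : Fin 6 → ℝ)) = ENNReal.ofReal (17/19440) := by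
    exact vol_rec' _ _ _ 1 5 _ _ _ h1 h6 (by funext k; fin_cases k <;> rfl)
      (by funext k; fin_cases k <;> rfl) (1/2) (-1) rfl rfl (by norm_num) (by norm_num)
  have h8 : volume (cutS (![1, (1/2), (1/2), (1/5), 0, (-1)] : Fin 6 → ℝ)) = ENNReal.ofReal (11/9720) := by
    exact vol_rec' _ _ _ 0 5 _ _ _ h0 h7 (by funext k; fin_cases k <;> rfl)
      (by funext k; fin_cases k <;> rfl) 1 (-1) rfl rfl (by norm_num) (by norm_num)
  have h9 : volume (cutS (![0, 0, 0, 0, (-1), (-1)] : Fin 6 → ℝ)) = ENNReal.ofReal 0 := by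
    exact base_neg _ (by norm_num [Fin.forall_fin_succ]) 4 (by simp)
  have h10 : volume (cutS (![0, 0, 0, (1/5), (-1), (-1)] : Fin 6 → ℝ)) = ENNReal.ofReal (1/25920) := by
    exact vol_rec' _ _ _ 3 4 _ _ _ h5 h9 (by funext k; fin_cases k <;> rfl)
      (by funext k; fin_cases k <;> rfl) (1/5) (-1) rfl rfl (by norm_num) (by norm_num)
  have h11 : volume (cutS (![0, 0, (1/2), (1/5), (-1), (-1)] : Fin 6 → ℝ)) = ENNReal.ofReal (1/4320) := by
    exact vol_rec' _ _ _ 2 4 _ _ _ h6 h10 (by funext k; fin_cases k <;> rfl)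
      (by funext k; fin_cases k <;> rfl) (1/2) (-1) rfl rfl (by norm_num) (by norm_num)
  have h12 : volume (cutS (![0, (1/2), (1/2), (1/5), (-1), (-1)] : Fin 6 → ℝ)) = ENNReal.ofReal (13/29160) := by
    exact vol_rec' _ _ _ 1 4 _ _ _ h7 h11 (by funext k; fin_cases k <;> rfl)
      (by funext k; fin_cases k <;> rfl) (1/2) (-1) rfl rfl (by norm_num) (by norm_num)
  have h13 : volume (cutS (![1, (1/2), (1/2), (1/5), (-1), (-1)] : Fin 6 → ℝ)) = ENNReal.ofReal (23/29160) := by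
    exact vol_rec' _ _ _ 0 4 _ _ _ h8 h12 (by funext k; fin_cases k <;> rfl)
      (by funext k; fin_cases k <;> rfl) 1 (-1) rfl rfl (by norm_num) (by norm_num)
  exact h13

lemma vol_affine (M : Matrix (Fin 6) (Fin 6) ℝ) (b : Fin 6 → ℝ) (S : Set (Fin 6 → ℝ)) (d : ℝ)
    (hd : M.det = d) (hd0 : d ≠ 0) :
    volume {x : Fin 6 → ℝ | M.mulVec x + b ∈ S} = ENNReal.ofReal |d⁻¹| * volume S := by
  have : {x | M.mulVec x + b ∈ S} = (Matrix.toLin' M) ⁻¹' ((fun y => y + b) ⁻¹' S) := by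
    ext x; simp [Matrix.toLin'_apply]
  rw [this, Measure.addHaar_preimage_linearMap _ (by rwa [LinearMap.det_toLin', hd]),
    LinearMap.det_toLin', hd, measure_preimage_add_right]

set_option maxHeartbeats 4000000 in
theorem volume_E123 : volume E123 = 23 / 921600 := by
  let pr (i : Fin 6) : (Fin 6 → ℝ) →ₗ[ℝ] ℝ := LinearMap.proj i
  let f : (Fin 6 → ℝ) →ₗ[ℝ] ℝ := pr 2 + pr 3 - pr 4 - pr 1
  have hf : f ≠ 0 := by
    intro h0
    have := congrArg (fun f => f (Pi.single 2 1)) h0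
    simp [f, pr] at this
  have e1 : E123 ∩ {x | 0 ≤ f x} =
      {x | (!![2, 0, 0, 0, 0, 0;
               0, 8/3, 0, -8/3, 0, 0;
               0, 0, -4/3, 4/3, 0, 0;
               0, -8/3, 8/3, 8/3, -8/3, 0;
               0, 0, -4/3, -4/3, 4/3, 4/3;
               0, 0, 0, 0, -2/3, -4/3] : Matrix (Fin 6) (Fin 6) ℝ).mulVec x + ![0, 0, 0, 0, 0, 1]
        ∈ cutS ![1, (1/2), (1/2), (-1/4), (-1), (-1)]} := by
    ext x
    simp [E123, cutS, f, pr, Fin.forall_fin_succ, Fin.sum_univ_succ, Matrix.mulVec, dotProduct]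
    constructor
    · intro h
      refine ⟨⟨?_, ?_, ?_, ?_, ?_, ?_⟩, ?_, ?_⟩ <;> linarith
    · intro h
      refine ⟨⟨⟨?_, ?_, ?_, ?_⟩, ⟨?_, ?_, ?_, ?_⟩, ⟨?_, ?_, ?_, ?_⟩, ⟨?_, ?_, ?_⟩, ⟨?_, ?_, ?_⟩,
        ⟨?_, ?_, ?_⟩⟩, ?_⟩ <;> linarith
  have e2 : E123 ∩ {x | f x ≤ 0} =
      {x | (!![2, 0, 0, 0, 0, 0;
               0, 0, 8/3, 0, -8/3, 0;
               0, 0, -4/3, 4/3, 0, 0;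
               0, 10/3, -10/3, -10/3, 10/3, 0;
               0, -4/3, 0, 0, 0, 4/3;
               0, 0, 0, 0, -2/3, -4/3] : Matrix (Fin 6) (Fin 6) ℝ).mulVec x + ![0, 0, 0, 0, 0, 1]
        ∈ cutS ![1, (1/2), (1/2), (1/5), (-1), (-1)]} := by
    ext x
    simp [E123, cutS, f, pr, Fin.forall_fin_succ, Fin.sum_univ_succ, Matrix.mulVec, dotProduct]
    constructor
    · intro h
      refine ⟨⟨?_, ?_, ?_, ?_, ?_, ?_⟩, ?_, ?_⟩ <;> linarith
    · intro h
      refine ⟨⟨⟨?_, ?_, ?_, ?_⟩, ⟨?_, ?_, ?_, ?_⟩, ⟨?_, ?_, ?_, ?_⟩, ⟨?_, ?_, ?_⟩, ⟨?_, ?_, ?_⟩,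
        ⟨?_, ?_, ?_⟩⟩, ?_⟩ <;> linarith
  rw [vol_split f hf, e1, e2, vol_affine _ _ _ (-4096/81) (by
      simp [Matrix.det_succ_row_zero, Fin.sum_univ_succ, Fin.succAbove]; norm_num) (by norm_num),
    vol_affine _ _ _ (5120/81) (by
      simp [Matrix.det_succ_row_zero, Fin.sum_univ_succ, Fin.succAbove]; norm_num) (by norm_num),
    case_one, case_two, ← ENNReal.ofReal_mul (by positivity), ← ENNReal.ofReal_mul (by positivity),
    ← ENNReal.ofReal_add (by positivity) (by positivity)]
  rw [show (23 / 921600 : ENNReal) = ENNReal.ofReal (23 / 921600) by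
    rw [ENNReal.ofReal_div_of_pos (by norm_num)]; norm_num]
  congr 1
  norm_num [abs_of_pos, abs_of_neg]
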